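/- arXiv:2403.19466 — 3 statements merged into one kernel-verified Lean document; each statement's English description precedes it below -/
import Mathlib

section
/- Let Φ ∈ C([0,∞)) ∩ C¹_loc((0,∞)) be strictly increasing with Φ(0) = 0 and Φ' > 0 on (0,∞). Let σ ∈ C([0,∞)) ∩ C¹_loc((0,∞)) satisfy σ(0) = 0 together with the growth bounds: σ²(ξ) ≤ c(1 + ξ + Φ(ξ)) for all ξ ∈ [0,∞) for some c ∈ (0,∞), and for every δ ∈ (0,1) there is c_δ ∈ (0,∞) with (σ'(ξ))⁴ / Φ'(ξ) ≤ c_δ (1 + ξ + Φ(ξ)) for all ξ ∈ (δ,∞). Then there exists a sequence (σ_n)_{n∈ℕ} of functions σ_n ∈ C([0,∞)) ∩ C^∞((0,∞)) with σ_n(0) = 0, whose derivatives σ_n' extend to smooth, compactly supported functions on [0,∞), such that: σ_n → σ and σ_n' → σ' uniformly on every compact subset of (0,∞); and the growth bounds hold uniformly in n, i.e. there are constants c' ∈ (0,∞) and, for every δ ∈ (0,1), c'_δ ∈ (0,∞), independent of n, with σ_n²(ξ) ≤ c'(1 + ξ + Φ(ξ)) for all ξ ∈ [0,∞) and (σ_n'(ξ))⁴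 / Φ'(ξ) ≤ c'_δ (1 + ξ + Φ(ξ)) for all ξ ∈ (δ,∞). -/
open MeasureTheory Filter Topology

/-!
Cut `σ'` off outside `[1/n, n]` and smooth it so that the result `ψ` is pointwise close to `σ'` on
`[1/n, n]`, satisfies `|ψ| ≤ |σ'| + Φ'^(1/4)` everywhere, and differs from `1_{[1/n, n]} σ'` by at
most `1/n` in `L¹`. The pointwise bound controls `ψ⁴/Φ'`. By the `L¹` bound the primitive
`σ_n(ξ) = ∫₀^ξ ψ` stays within `1/n` of `σ(t) - σ(1/n)`, where `t` is the projection of `ξ` to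
`[1/n, n]`. Since `σ(1/n) → 0`, this gives local uniform convergence, and since
`t ≤ max(ξ, 1)` it carries the growth of `σ` over to `σ_n`.
-/

theorem lintegral_le_mul_of_eq_zero_off {X : Type*} [MeasurableSpace X] {μ : Measure X} {s : Set X}
    {f : X → ENNReal} {C : ENNReal} (hs : MeasurableSet s) (hfC : ∀ x ∈ s, f x ≤ C)
    (hf0 : ∀ x ∉ s, f x = 0) : ∫⁻ x, f x ∂μ ≤ C * μ s := by
  rw [← lintegral_indicator_const hs]
  exact lintegral_mono fun x => Set.le_indicator (f := f) hfC (fun y hy => (hf0 y hy).le) x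

theorem exists_continuous_cutoff_lintegral_le {X F : Type*} [TopologicalSpace X] [T2Space X]
    [LocallyCompactSpace X] [MeasurableSpace X] [OpensMeasurableSpace X] [NormedAddCommGroup F]
    [NormedSpace ℝ F] {μ : Measure X} [IsFiniteMeasureOnCompacts μ] [μ.OuterRegular]
    {K V : Set X} {f : X → F} {ε : ENNReal} (hK : IsCompact K) (hV : IsOpen V) (hKV : K ⊆ V)
    (hf : ContinuousOn f V) (hε : ε ≠ 0) :
    ∃ g : X → F, Continuous g ∧ HasCompactSupport g ∧ tsupport g ⊆ V ∧ Set.EqOn g f K ∧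
      (∀ x, ‖g x‖ ≤ ‖f x‖) ∧ ∫⁻ x, ‖g x - K.indicator f x‖ₑ ∂μ ≤ ε := by
  obtain ⟨L, hL, hKL, hLV⟩ := exists_compact_between hK hV hKV
  obtain ⟨M, hM⟩ := hL.exists_bound_of_continuousOn (hf.mono hLV)
  obtain ⟨r, hr, hrM⟩ := ENNReal.exists_nnreal_pos_mul_lt (a := ENNReal.ofReal M) (by simp) hε
  obtain ⟨U, hKU, hU, -, hμU⟩ := hK.measurableSet.exists_isOpen_sdiff_lt (μ := μ)
    hK.measure_lt_top.ne (ENNReal.coe_ne_zero.2 hr.ne')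
  obtain ⟨χ, hχ1, hχc, hχU, hχ⟩ := exists_continuousMap_one_of_isCompact_subset_isOpen hK
    (hU.inter isOpen_interior) (Set.subset_inter hKU hKL)
  have hgU : tsupport (fun x => χ x • f x) ⊆ U ∩ interior L :=
    (tsupport_smul_subset_left χ f).trans hχU
  have hgV := hgU.trans (Set.inter_subset_right.trans (interior_subset.trans hLV))
  have hgf : ∀ x, ‖χ x • f x‖ ≤ ‖f x‖ := fun x => by
    rw [norm_smul, Real.norm_of_nonneg (hχ x).1]
    exact mul_le_of_le_one_left (norm_nonneg _) (hχ x).2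
  have hgK : ∀ x ∈ K, χ x • f x = f x := fun x hx => by simp [hχ1 hx]
  have hgM : ∀ x, ‖χ x • f x‖ₑ ≤ ENNReal.ofReal M := fun x => by
    by_cases hx : x ∈ tsupport (fun x => χ x • f x)
    · rw [← ofReal_norm]
      exact ENNReal.ofReal_le_ofReal ((hgf x).trans (hM x (interior_subset (hgU hx).2)))
    · simp [image_eq_zero_of_notMem_tsupport hx]
  refine ⟨fun x => χ x • f x,
    (χ.continuous.continuousOn.smul hf).continuous_of_tsupport_subset hV hgV,
    hχc.of_isClosed_subset (isClosed_tsupport _) (tsupport_smul_subset_left χ f),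
    hgV, hgK, hgf, ?_⟩
  calc ∫⁻ x, ‖χ x • f x - K.indicator f x‖ₑ ∂μ
      ≤ ENNReal.ofReal M * μ (U \ K) := by
        refine lintegral_le_mul_of_eq_zero_off (hU.measurableSet.diff hK.measurableSet)
          (fun x hx => ?_) (fun x hx => ?_)
        · rw [Set.indicator_of_notMem hx.2, sub_zero]
          exact hgM x
        · by_cases hxK : x ∈ K
          · simp [hxK, hgK x hxK]
          · have hgx := image_eq_zero_of_notMem_tsupport fun h => hx ⟨(hgU h).1, hxK⟩
            simp [hxK, hgx]
    _ ≤ ENNReal.ofReal M * r := by gcongr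
    _ ≤ ε := by rw [mul_comm]; exact hrM.le

section Smoothing

variable {E F : Type*} [NormedAddCommGroup E] [NormedSpace ℝ E] [FiniteDimensional ℝ E]
  [MeasurableSpace E] [OpensMeasurableSpace E] [NormedAddCommGroup F] [NormedSpace ℝ F]
  {μ : Measure E} [IsFiniteMeasureOnCompacts μ] {w : E → ℝ} {ε : ENNReal}

theorem exists_contDiff_approx_lintegral_le {g : E → F} (hg : Continuous g)
    (hgc : HasCompactSupport g) (hw : ContinuousOn w (tsupport g))
    (hwpos : ∀ x ∈ tsupport g, 0 < w x) (hε : ε ≠ 0) :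
    ∃ ψ : E → F, ContDiff ℝ (⊤ : ℕ∞) ψ ∧ tsupport ψ ⊆ tsupport g ∧
      (∀ x ∈ tsupport g, ‖ψ x - g x‖ ≤ w x) ∧ ∫⁻ x, ‖ψ x - g x‖ₑ ∂μ ≤ ε := by
  obtain ⟨η, hη, hηw⟩ := hgc.isCompact.exists_forall_le' hw hwpos
  obtain ⟨r, hr, hrμ⟩ := ENNReal.exists_nnreal_pos_mul_lt
    (a := μ (tsupport g)) hgc.isCompact.measure_lt_top.ne hε
  obtain ⟨ψ, hψ, hψg, hψsupp⟩ := hg.exists_contDiff_approx ⊤ (ε := fun _ => min η r)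
    continuous_const (fun _ => lt_min hη hr)
  simp only [dist_eq_norm] at hψg
  refine ⟨ψ, hψ, closure_mono hψsupp,
    fun x hx => (hψg x).le.trans ((min_le_left _ _).trans (hηw x hx)), ?_⟩
  refine (lintegral_le_mul_of_eq_zero_off (C := r) (isClosed_tsupport g).measurableSet
    (fun x _ => ?_) (fun x hx => ?_)).trans hrμ.le
  · rw [enorm_le_coe]
    exact_mod_cast (hψg x).le.trans (min_le_right _ _)
  · have hgx := image_eq_zero_of_notMem_tsupport hx
    have hψx := image_eq_zero_of_notMem_tsupport fun h => hx (closure_mono hψsupp h)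
    simp [hgx, hψx]

theorem exists_contDiff_truncation_lintegral_le [μ.OuterRegular]
    {K V : Set E} {f : E → F} (hK : IsCompact K) (hV : IsOpen V) (hKV : K ⊆ V)
    (hf : ContinuousOn f V) (hw : ContinuousOn w V) (hwpos : ∀ x ∈ V, 0 < w x) (hε : ε ≠ 0) :
    ∃ ψ : E → F, ContDiff ℝ (⊤ : ℕ∞) ψ ∧ HasCompactSupport ψ ∧
      (∀ x ∈ K, ‖ψ x - f x‖ ≤ w x) ∧ (∀ x ∈ V, ‖ψ x‖ ≤ ‖f x‖ + w x) ∧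
      ∫⁻ x, ‖ψ x - K.indicator f x‖ₑ ∂μ ≤ ε := by
  have hε2 : ε / 2 ≠ 0 := (ENNReal.half_pos hε).ne'
  obtain ⟨g, hg, hgc, hgV, hgK, hgf, hgε⟩ :=
    exists_continuous_cutoff_lintegral_le (μ := μ) hK hV hKV hf hε2
  obtain ⟨ψ, hψ, hψsupp, hψw, hψε⟩ := exists_contDiff_approx_lintegral_le (μ := μ) hg hgc
    (hw.mono hgV) (fun x hx => hwpos x (hgV hx)) hε2
  have hψg : ∀ x ∈ V, ‖ψ x - g x‖ ≤ w x := fun x hx => by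
    by_cases hxg : x ∈ tsupport g
    · exact hψw x hxg
    · have hgx := image_eq_zero_of_notMem_tsupport hxg
      have hψx := image_eq_zero_of_notMem_tsupport fun h => hxg (hψsupp h)
      simpa [hgx, hψx] using (hwpos x hx).le
  refine ⟨ψ, hψ, hgc.of_isClosed_subset (isClosed_tsupport ψ) hψsupp,
    fun x hx => hgK hx ▸ hψg x (hKV hx), fun x hx => ?_, ?_⟩
  · calc ‖ψ x‖ ≤ ‖g x‖ + ‖ψ x - g x‖ := norm_le_norm_add_norm_sub' _ _
      _ ≤ ‖f x‖ + w x := add_le_add (hgf x) (hψg x hx)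
  · calc ∫⁻ x, ‖ψ x - K.indicator f x‖ₑ ∂μ
        ≤ ∫⁻ x, (‖ψ x - g x‖ₑ + ‖g x - K.indicator f x‖ₑ) ∂μ :=
          lintegral_mono fun x => by
            simpa using enorm_add_le (ψ x - g x) (g x - K.indicator f x)
      _ = ∫⁻ x, ‖ψ x - g x‖ₑ ∂μ + ∫⁻ x, ‖g x - K.indicator f x‖ₑ ∂μ :=
          lintegral_add_left (hψ.continuous.sub hg).enorm.measurable _
      _ ≤ ε / 2 + ε / 2 := add_le_add hψε hgε
      _ = ε := ENNReal.add_halves ε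

end Smoothing

section Primitive

variable {F : Type*} [NormedAddCommGroup F] [NormedSpace ℝ F] [CompleteSpace F]

theorem integral_indicator_Icc_deriv {σ : ℝ → F} {a b c ξ : ℝ} (hca : c ≤ a) (hab : a ≤ b)
    (hcξ : c ≤ ξ) (hσ : ∀ x ∈ Set.Icc a b, DifferentiableAt ℝ σ x)
    (hσ' : ContinuousOn (deriv σ) (Set.Icc a b)) :
    ∫ x in c..ξ, (Set.Icc a b).indicator (deriv σ) x = σ (max a (min b ξ)) - σ a := by
  have hsub : Set.uIcc a (max a (min b ξ)) ⊆ Set.Icc a b := by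
    rw [Set.uIcc_of_le (le_max_left _ _)]
    exact Set.Icc_subset_Icc_right (max_le hab (min_le_left _ _))
  have hset : Set.Ioc c ξ ∩ Set.Ioc a b = Set.Ioc a (max a (min b ξ)) := by
    ext x
    simp only [Set.mem_inter_iff, Set.mem_Ioc, le_max_iff, le_min_iff]
    grind
  calc ∫ x in c..ξ, (Set.Icc a b).indicator (deriv σ) x
      = ∫ x in Set.Ioc c ξ ∩ Set.Icc a b, deriv σ x := by
        rw [intervalIntegral.integral_of_le hcξ, setIntegral_indicator measurableSet_Icc]
    _ = ∫ x in Set.Ioc c ξ ∩ Set.Ioc a b, deriv σ x :=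
        setIntegral_congr_set ((ae_eq_refl _).inter Ioc_ae_eq_Icc.symm)
    _ = ∫ x in a..max a (min b ξ), deriv σ x := by
        rw [hset, intervalIntegral.integral_of_le (le_max_left _ _)]
    _ = σ (max a (min b ξ)) - σ a :=
        intervalIntegral.integral_deriv_eq_sub (fun x hx => hσ x (hsub hx))
          (hσ'.mono hsub).intervalIntegrable

theorem exists_contDiff_deriv_eq {ψ : ℝ → F} (hψ : ContDiff ℝ (⊤ : ℕ∞) ψ) (a : ℝ) :
    ∃ ρ : ℝ → F, ContDiff ℝ (⊤ : ℕ∞) ρ ∧ deriv ρ = ψ ∧ ∀ ξ, ρ ξ = ∫ x in a..ξ, ψ x := by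
  have hderiv : deriv (fun ξ => ∫ x in a..ξ, ψ x) = ψ :=
    funext (hψ.continuous.deriv_integral ψ a)
  refine ⟨_, contDiff_infty_iff_deriv.2 ⟨fun ξ => ?_, hderiv.symm ▸ hψ⟩, hderiv, fun _ => rfl⟩
  exact (hψ.continuous.integral_hasStrictDerivAt a ξ).hasDerivAt.differentiableAt

end Primitive

section MonotoneWeight

variable {X : Type*} [LinearOrder X] {W : X → ℝ} {x₀ y z : X}

theorem one_le_one_div_mul_of_monotoneOn (hW : MonotoneOn W (Set.Ici x₀)) (hW₀ : 0 < W x₀)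
    (hy : x₀ ≤ y) : 1 ≤ 1 / W x₀ * W y := by
  rw [one_div_mul_eq_div, one_le_div hW₀]
  exact hW Set.self_mem_Ici hy hy

theorem map_max_le_div_mul_of_monotoneOn (hW : MonotoneOn W (Set.Ici x₀)) (hW₀ : 0 < W x₀)
    (hy : x₀ ≤ y) (hz : x₀ ≤ z) : W (max y z) ≤ W y / W x₀ * W z := by
  have hWy : W x₀ ≤ W y := hW Set.self_mem_Ici hy hy
  have hWz : W x₀ ≤ W z := hW Set.self_mem_Ici hz hz
  rw [hW.map_max hy hz, div_mul_eq_mul_div, le_div_iff₀ hW₀]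
  rcases max_choice (W y) (W z) with h | h <;> rw [h]
  · exact mul_le_mul_of_nonneg_left hWz (hW₀.le.trans hWy)
  · rw [mul_comm]
    exact mul_le_mul_of_nonneg_right hWy (hW₀.le.trans hWz)

end MonotoneWeight

/-- `ρ` is a smooth truncation of `σ`: up to the error `η` it is the primitive vanishing at `0` of
`deriv σ` cut off outside `[a, b]`, and its derivative exceeds `deriv σ` in absolute value by at
most `τ`. The value of the primitive at `x` is written `σ (max a (min b x)) - σ a`, where
`max a (min b x)` is the projection of `x` to `[a, b]`. -/
structure IsSmoothTruncation (σ τ : ℝ → ℝ) (a b η : ℝ) (ρ : ℝ → ℝ) : Prop where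
  contDiff : ContDiff ℝ (⊤ : ℕ∞) ρ
  map_zero : ρ 0 = 0
  hasCompactSupport_deriv : HasCompactSupport (deriv ρ)
  abs_deriv_sub_le : ∀ x ∈ Set.Icc a b, |deriv ρ x - deriv σ x| ≤ η
  abs_deriv_le : ∀ x > 0, |deriv ρ x| ≤ |deriv σ x| + τ x
  abs_sub_clamp_le : ∀ x ≥ 0, |ρ x - (σ (max a (min b x)) - σ a)| ≤ η

theorem exists_isSmoothTruncation {σ τ : ℝ → ℝ} {a b η : ℝ}
    (hσ : ∀ x > 0, DifferentiableAt ℝ σ x) (hσ' : ContinuousOn (deriv σ) (Set.Ioi 0))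
    (hτ : ContinuousOn τ (Set.Ioi 0)) (hτpos : ∀ x > 0, 0 < τ x)
    (ha : 0 < a) (hab : a ≤ b) (hη : 0 < η) :
    ∃ ρ, IsSmoothTruncation σ τ a b η ρ := by
  have hIcc : Set.Icc a b ⊆ Set.Ioi 0 := fun x hx => ha.trans_le hx.1
  obtain ⟨ψ, hψ, hψc, hψK, hψV, hψint⟩ := exists_contDiff_truncation_lintegral_le (μ := volume)
    (w := fun x => min η (τ x)) isCompact_Icc isOpen_Ioi hIcc hσ' (continuousOn_const.inf hτ)
    (fun x hx => lt_min hη (hτpos x hx)) (ENNReal.ofReal_pos.2 hη).ne'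
  obtain ⟨ρ, hρ, hρψ, hρint⟩ := exists_contDiff_deriv_eq hψ 0
  refine ⟨ρ, hρ, by simp [hρint], hρψ ▸ hψc,
    fun x hx => hρψ ▸ (hψK x hx).trans (min_le_left _ _),
    fun x hx => hρψ ▸ (hψV x hx).trans (add_le_add le_rfl (min_le_right _ _)), fun x hx => ?_⟩
  have hind : Integrable ((Set.Icc a b).indicator (deriv σ)) :=
    (integrable_indicator_iff measurableSet_Icc).2 (hσ'.mono hIcc).integrableOn_Icc
  rw [hρint, ← integral_indicator_Icc_deriv ha.le hab hx (fun y hy => hσ y (hIcc hy))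
      (hσ'.mono hIcc),
    ← intervalIntegral.integral_sub (hψ.continuous.intervalIntegrable _ _)
      hind.intervalIntegrable, intervalIntegral.integral_of_le hx, ← Real.norm_eq_abs,
    ← ENNReal.ofReal_le_ofReal_iff hη.le, ofReal_norm]
  exact (enorm_integral_le_lintegral_enorm _).trans ((setLIntegral_le_lintegral _ _).trans hψint)

theorem exists_seq_isSmoothTruncation {σ τ : ℝ → ℝ} (hσ : ∀ x > 0, DifferentiableAt ℝ σ x)
    (hσ' : ContinuousOn (deriv σ) (Set.Ioi 0)) (hτ : ContinuousOn τ (Set.Ioi 0))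
    (hτpos : ∀ x > 0, 0 < τ x) :
    ∃ (a b : ℕ → ℝ) (ρ : ℕ → ℝ → ℝ), (∀ n, a n ∈ Set.Ioc 0 1) ∧ Tendsto a atTop (𝓝 0) ∧
      Tendsto b atTop atTop ∧ ∀ n, IsSmoothTruncation σ τ (a n) (b n) (a n) (ρ n) := by
  have ha (n : ℕ) : 1 / ((n : ℝ) + 1) ∈ Set.Ioc 0 1 :=
    ⟨Nat.one_div_pos_of_nat, (div_le_one (by positivity)).2 (by simp)⟩
  choose ρ hρ using fun n : ℕ => exists_isSmoothTruncation hσ hσ' hτ hτpos (ha n).1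
    ((ha n).2.trans (by simp : (1 : ℝ) ≤ n + 1)) (ha n).1
  exact ⟨_, _, ρ, ha, tendsto_one_div_add_atTop_nhds_zero_nat,
    tendsto_atTop_add_const_right _ _ tendsto_natCast_atTop_atTop, hρ⟩

namespace IsSmoothTruncation

section Bounds

variable {σ τ ρ : ℝ → ℝ} {a b η : ℝ}

theorem abs_sub_le (h : IsSmoothTruncation σ τ a b η ρ) (ha : 0 ≤ a) {x : ℝ}
    (hx : x ∈ Set.Icc a b) : |ρ x - σ x| ≤ η + |σ a| := by
  have hρx := h.abs_sub_clamp_le x (ha.trans hx.1)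
  rw [min_eq_right hx.2, max_eq_right hx.1] at hρx
  calc |ρ x - σ x| = |(ρ x - (σ x - σ a)) + -σ a| := by ring_nf
    _ ≤ η + |σ a| := (abs_add_le _ _).trans (by rw [abs_neg]; gcongr)

theorem sq_le (h : IsSmoothTruncation σ τ a b η ρ) {B ξ : ℝ} (ha : 0 < a) (hξ : 0 ≤ ξ)
    (hσ : ∀ x ∈ Set.Ioc 0 (max a ξ), σ x ^ 2 ≤ B) : ρ ξ ^ 2 ≤ 3 * (η ^ 2 + 2 * B) := by
  set t := max a (min b ξ)
  have ht : σ t ^ 2 ≤ B :=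
    hσ t ⟨ha.trans_le (le_max_left _ _), max_le_max_left _ (min_le_right _ _)⟩
  have hσa : σ a ^ 2 ≤ B := hσ a ⟨ha, le_max_left _ _⟩
  set d := ρ ξ - (σ t - σ a)
  have hd : d ^ 2 ≤ η ^ 2 := sq_le_sq.2 ((h.abs_sub_clamp_le ξ hξ).trans (le_abs_self η))
  calc ρ ξ ^ 2 = (d + σ t - σ a) ^ 2 := by ring
    _ ≤ 3 * (d ^ 2 + (σ t ^ 2 + σ a ^ 2)) := by
        nlinarith [sq_nonneg (d - σ t), sq_nonneg (d + σ a), sq_nonneg (σ t + σ a)]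
    _ ≤ 3 * (η ^ 2 + 2 * B) := by rw [two_mul]; gcongr

theorem sq_le_mul_of_monotoneOn (h : IsSmoothTruncation σ τ a b η ρ) {W : ℝ → ℝ} {c ξ : ℝ}
    (hW : MonotoneOn W (Set.Ici 0)) (hW0 : 0 < W 0) (hc : 0 ≤ c)
    (hσ : ∀ x > 0, σ x ^ 2 ≤ c * W x) (ha : 0 < a) (ha1 : a ≤ 1) (hη1 : η ≤ 1) (hξ : 0 ≤ ξ) :
    ρ ξ ^ 2 ≤ 3 * (1 / W 0 + 2 * c) * (W 1 / W 0) * W ξ := by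
  have hη : 0 ≤ η := (abs_nonneg _).trans (h.abs_sub_clamp_le ξ hξ)
  have hm : 0 ≤ max 1 ξ := zero_le_one.trans (le_max_left _ _)
  have hσm : ∀ x ∈ Set.Ioc 0 (max a ξ), σ x ^ 2 ≤ c * W (max 1 ξ) := fun x hx =>
    (hσ x hx.1).trans <| mul_le_mul_of_nonneg_left
      (hW hx.1.le hm (hx.2.trans (max_le_max_right _ ha1))) hc
  calc ρ ξ ^ 2 ≤ 3 * (η ^ 2 + 2 * (c * W (max 1 ξ))) := h.sq_le ha hξ hσm
    _ ≤ 3 * (1 / W 0 * W (max 1 ξ) + 2 * (c * W (max 1 ξ))) := by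
        gcongr
        exact (pow_le_one₀ hη hη1).trans (one_le_one_div_mul_of_monotoneOn hW hW0 hm)
    _ = 3 * (1 / W 0 + 2 * c) * W (max 1 ξ) := by ring
    _ ≤ 3 * (1 / W 0 + 2 * c) * (W 1 / W 0 * W ξ) := by
        gcongr
        exact map_max_le_div_mul_of_monotoneOn hW hW0 zero_le_one hξ
    _ = 3 * (1 / W 0 + 2 * c) * (W 1 / W 0) * W ξ := by ring

theorem deriv_pow_four_div_le (h : IsSmoothTruncation σ τ a b η ρ) {w x : ℝ} (hx : 0 < x)
    (hτ : 0 ≤ τ x) (hw : 0 < w) (hτw : τ x ^ 4 ≤ w) :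
    deriv ρ x ^ 4 / w ≤ 8 * (deriv σ x ^ 4 / w + 1) := by
  have hpow : deriv ρ x ^ 4 ≤ 8 * (deriv σ x ^ 4 + w) :=
    calc deriv ρ x ^ 4 = |deriv ρ x| ^ 4 := (Even.pow_abs (by decide) _).symm
      _ ≤ (|deriv σ x| + τ x) ^ 4 := by gcongr; exact h.abs_deriv_le x hx
      _ ≤ 2 ^ (4 - 1) * (|deriv σ x| ^ 4 + τ x ^ 4) := add_pow_le (abs_nonneg _) hτ 4
      _ = 8 * (deriv σ x ^ 4 + τ x ^ 4) := by rw [Even.pow_abs (by decide)]; norm_num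
      _ ≤ 8 * (deriv σ x ^ 4 + w) := by gcongr
  rw [div_add_one hw.ne', ← mul_div_assoc]
  gcongr

theorem deriv_pow_four_div_le_mul (h : IsSmoothTruncation σ τ a b η ρ) {w x c e W : ℝ}
    (hx : 0 < x) (hτ : 0 ≤ τ x) (hw : 0 < w) (hτw : τ x ^ 4 ≤ w)
    (hσ : deriv σ x ^ 4 / w ≤ c * W) (hW : 1 ≤ e * W) :
    deriv ρ x ^ 4 / w ≤ 8 * (c + e) * W :=
  calc deriv ρ x ^ 4 / w ≤ 8 * (deriv σ x ^ 4 / w + 1) := h.deriv_pow_four_div_le hx hτ hw hτw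
    _ ≤ 8 * (c * W + e * W) := by gcongr
    _ = 8 * (c + e) * W := by ring

end Bounds

section Convergence

variable {ι : Type*} {l : Filter ι} {σ τ : ℝ → ℝ} {a b η : ι → ℝ} {ρ : ι → ℝ → ℝ} {K : Set ℝ}

theorem tendstoUniformlyOn (h : ∀ i, IsSmoothTruncation σ τ (a i) (b i) (η i) (ρ i))
    (ha : ∀ i, 0 ≤ a i) (hη : Tendsto η l (𝓝 0)) (hσa : Tendsto (fun i => σ (a i)) l (𝓝 0))
    (hK : ∀ᶠ i in l, K ⊆ Set.Icc (a i) (b i)) : TendstoUniformlyOn ρ σ l K := by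
  have herr : Tendsto (fun i => η i + |σ (a i)|) l (𝓝 0) := by simpa using hη.add hσa.abs
  rw [Metric.tendstoUniformlyOn_iff]
  intro ε hε
  filter_upwards [hK, herr.eventually (gt_mem_nhds hε)] with i hKi herri x hx
  rw [dist_comm, Real.dist_eq]
  exact ((h i).abs_sub_le (ha i) (hKi hx)).trans_lt herri

theorem tendstoUniformlyOn_deriv (h : ∀ i, IsSmoothTruncation σ τ (a i) (b i) (η i) (ρ i))
    (hη : Tendsto η l (𝓝 0)) (hK : ∀ᶠ i in l, K ⊆ Set.Icc (a i) (b i)) :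
    TendstoUniformlyOn (fun i => deriv (ρ i)) (deriv σ) l K := by
  rw [Metric.tendstoUniformlyOn_iff]
  intro ε hε
  filter_upwards [hK, hη.eventually (gt_mem_nhds hε)] with i hKi hηi x hx
  rw [dist_comm, Real.dist_eq]
  exact ((h i).abs_deriv_sub_le x (hKi hx)).trans_lt hηi

end Convergence

end IsSmoothTruncation

theorem eventually_subset_Icc_of_isCompact {ι X : Type*} [LinearOrder X] [TopologicalSpace X]
    [OrderTopology X] {l : Filter ι} {a b : ι → X} {x₀ : X} {K : Set X}
    (ha : Tendsto a l (𝓝 x₀)) (hb : Tendsto b l atTop) (hK : IsCompact K)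
    (hK₀ : K ⊆ Set.Ioi x₀) : ∀ᶠ i in l, K ⊆ Set.Icc (a i) (b i) := by
  rcases K.eq_empty_or_nonempty with rfl | hne
  · simp
  obtain ⟨u, huK, hu⟩ := hK.exists_isLeast hne
  obtain ⟨v, -, hv⟩ := hK.exists_isGreatest hne
  filter_upwards [ha.eventually (gt_mem_nhds (hK₀ huK)), hb.eventually_ge_atTop v]
    with i hai hbi x hx
  exact ⟨hai.le.trans (hu hx), (hv hx).trans hbi⟩

theorem sigma_smooth_approximation_general {W w σ : ℝ → ℝ}
    (hW : MonotoneOn W (Set.Ici 0)) (hW0 : 0 < W 0)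
    (hw : ContinuousOn w (Set.Ioi 0)) (hwpos : ∀ ξ > 0, 0 < w ξ)
    (hσ0 : Tendsto σ (𝓝[>] 0) (𝓝 0)) (hσ : ∀ ξ > 0, DifferentiableAt ℝ σ ξ)
    (hσ' : ContinuousOn (deriv σ) (Set.Ioi 0))
    (hσgrow : ∃ c, ∀ ξ > 0, σ ξ ^ 2 ≤ c * W ξ)
    (hσ'grow : ∀ δ ∈ Set.Ioo (0 : ℝ) 1, ∃ c, ∀ ξ > δ, deriv σ ξ ^ 4 / w ξ ≤ c * W ξ) :
    ∃ σn : ℕ → ℝ → ℝ,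
      (∀ n, ContDiff ℝ (⊤ : ℕ∞) (σn n) ∧ σn n 0 = 0 ∧ HasCompactSupport (deriv (σn n))) ∧
      (∀ K : Set ℝ, IsCompact K → K ⊆ Set.Ioi 0 →
        TendstoUniformlyOn σn σ atTop K ∧
        TendstoUniformlyOn (fun n => deriv (σn n)) (deriv σ) atTop K) ∧
      (∃ c, 0 < c ∧ ∀ n, ∀ ξ ≥ 0, σn n ξ ^ 2 ≤ c * W ξ) ∧
      (∀ δ ∈ Set.Ioo (0 : ℝ) 1, ∃ c, 0 < c ∧ ∀ n, ∀ ξ > δ,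
        deriv (σn n) ξ ^ 4 / w ξ ≤ c * W ξ) := by
  obtain ⟨c, hc⟩ := hσgrow
  have hW1 : 0 < W 1 := hW0.trans_le (hW Set.self_mem_Ici (Set.mem_Ici.2 zero_le_one) zero_le_one)
  have hc0 : 0 ≤ c := nonneg_of_mul_nonneg_left ((sq_nonneg _).trans (hc 1 one_pos)) hW1
  have hτpos : ∀ ξ > 0, 0 < √√(w ξ) := fun ξ hξ => Real.sqrt_pos.2 (Real.sqrt_pos.2 (hwpos ξ hξ))
  have hτw : ∀ ξ > 0, √√(w ξ) ^ 4 = w ξ := fun ξ hξ => by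
    rw [pow_mul _ 2 2, Real.sq_sqrt (Real.sqrt_nonneg _), Real.sq_sqrt (hwpos ξ hξ).le]
  obtain ⟨a, b, ρ, ha, ha_lim, hb_lim, hρ⟩ :=
    exists_seq_isSmoothTruncation hσ hσ' hw.sqrt.sqrt hτpos
  have hσa : Tendsto (fun n => σ (a n)) atTop (𝓝 0) :=
    hσ0.comp (tendsto_nhdsWithin_iff.2 ⟨ha_lim, .of_forall fun n => (ha n).1⟩)
  refine ⟨ρ, fun n => ⟨(hρ n).contDiff, (hρ n).map_zero, (hρ n).hasCompactSupport_deriv⟩,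
    fun K hK hK0 => ?_, ⟨3 * (1 / W 0 + 2 * c) * (W 1 / W 0), by positivity, fun n ξ hξ => ?_⟩,
    fun δ hδ => ?_⟩
  · have hKab := eventually_subset_Icc_of_isCompact ha_lim hb_lim hK hK0
    exact ⟨IsSmoothTruncation.tendstoUniformlyOn hρ (fun n => (ha n).1.le) ha_lim hσa hKab,
      IsSmoothTruncation.tendstoUniformlyOn_deriv hρ ha_lim hKab⟩
  · exact (hρ n).sq_le_mul_of_monotoneOn hW hW0 hc0 hc (ha n).1 (ha n).2 (ha n).2 hξ
  · obtain ⟨d, hd⟩ := hσ'grow δ hδ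
    have hw1 := hwpos 1 one_pos
    have hd0 : 0 ≤ d := nonneg_of_mul_nonneg_left
      ((by positivity : 0 ≤ deriv σ 1 ^ 4 / w 1).trans (hd 1 hδ.2)) hW1
    refine ⟨8 * (d + 1 / W 0), by positivity, fun n ξ hξ => ?_⟩
    have hξ0 : 0 < ξ := hδ.1.trans hξ
    exact (hρ n).deriv_pow_four_div_le_mul hξ0 (hτpos ξ hξ0).le (hwpos ξ hξ0) (hτw ξ hξ0).le
      (hd ξ hξ) (one_le_one_div_mul_of_monotoneOn hW hW0 hξ0.le)

/-- Approximation of the noise coefficient `σ` in `C¹_loc((0,∞))` by smooth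
functions `σ_n` with smooth, compactly supported (extensions of) derivatives, satisfying the
growth bounds `σ_n²(ξ) ≤ c'(1 + ξ + Φ(ξ))` and `(σ_n'(ξ))⁴/Φ'(ξ) ≤ c'_δ (1 + ξ + Φ(ξ))`
uniformly in `n`. -/
theorem sigma_smooth_approximation
    (Φ σ : ℝ → ℝ)
    (hΦcont : ContinuousOn Φ (Set.Ici 0))
    (hΦdiff : ∀ ξ > (0:ℝ), DifferentiableAt ℝ Φ ξ)
    (hΦ'cont : ContinuousOn (deriv Φ) (Set.Ioi 0))
    (hΦmono : StrictMonoOn Φ (Set.Ici 0)) (hΦ0 : Φ 0 = 0)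
    (hΦ'pos : ∀ ξ > (0:ℝ), 0 < deriv Φ ξ)
    (hσcont : ContinuousOn σ (Set.Ici 0))
    (hσdiff : ∀ ξ > (0:ℝ), DifferentiableAt ℝ σ ξ)
    (hσ'cont : ContinuousOn (deriv σ) (Set.Ioi 0))
    (hσ0 : σ 0 = 0)
    (c : ℝ) (hc : 0 < c)
    (hσgrow : ∀ ξ ≥ (0:ℝ), σ ξ ^ 2 ≤ c * (1 + ξ + Φ ξ))
    (cδ : ℝ → ℝ)
    (hcδpos : ∀ δ ∈ Set.Ioo (0:ℝ) 1, 0 < cδ δ)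
    (hσ'grow : ∀ δ ∈ Set.Ioo (0:ℝ) 1, ∀ ξ > δ,
      (deriv σ ξ) ^ 4 / deriv Φ ξ ≤ cδ δ * (1 + ξ + Φ ξ)) :
    ∃ σn : ℕ → ℝ → ℝ,
      -- each `σ_n` is continuous on `[0,∞)`, smooth on `(0,∞)`, and vanishes at `0`
      (∀ n, ContinuousOn (σn n) (Set.Ici 0) ∧ ContDiffOn ℝ (⊤ : ℕ∞) (σn n) (Set.Ioi 0) ∧
        σn n 0 = 0) ∧
      -- the derivative of `σ_n` extends to a smooth compactly supported function on `[0,∞)`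
      (∀ n, ∃ ψ : ℝ → ℝ, ContDiff ℝ (⊤ : ℕ∞) ψ ∧ HasCompactSupport ψ ∧
        ∀ ξ > (0:ℝ), deriv (σn n) ξ = ψ ξ) ∧
      -- convergence `σ_n → σ` in `C¹_loc((0,∞))`
      (∀ K : Set ℝ, IsCompact K → K ⊆ Set.Ioi 0 →
        TendstoUniformlyOn (fun n => σn n) σ atTop K ∧
        TendstoUniformlyOn (fun n => deriv (σn n)) (deriv σ) atTop K) ∧
      -- uniform-in-`n` growth bound for `σ_n²`
      (∃ c' : ℝ, 0 < c' ∧ ∀ n, ∀ ξ ≥ (0:ℝ), σn n ξ ^ 2 ≤ c' * (1 + ξ + Φ ξ)) ∧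
      -- uniform-in-`n` growth bound for `(σ_n')⁴/Φ'`
      (∀ δ ∈ Set.Ioo (0:ℝ) 1, ∃ c'δ : ℝ, 0 < c'δ ∧ ∀ n, ∀ ξ > δ,
        (deriv (σn n) ξ) ^ 4 / deriv Φ ξ ≤ c'δ * (1 + ξ + Φ ξ)) := by
  have hσlim : Tendsto σ (𝓝[>] 0) (𝓝 0) := by
    simpa only [hσ0] using (hσcont 0 Set.self_mem_Ici).mono_left
      (nhdsWithin_mono 0 Set.Ioi_subset_Ici_self)
  have hΦ : MonotoneOn Φ (Set.Ici 0) := hΦmono.monotoneOn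
  obtain ⟨σn, hσn, hlim, hgrow, hgrow'⟩ := sigma_smooth_approximation_general
    (W := fun ξ => 1 + ξ + Φ ξ)
    (((monotone_const.add monotone_id).monotoneOn _).add hΦ) (by simp [hΦ0]) hΦ'cont hΦ'pos
    hσlim hσdiff hσ'cont
    ⟨c, fun ξ hξ => hσgrow ξ hξ.le⟩ (fun δ hδ => ⟨cδ δ, hσ'grow δ hδ⟩)
  exact ⟨σn, fun n => ⟨(hσn n).1.continuous.continuousOn, (hσn n).1.contDiffOn, (hσn n).2.1⟩,
    fun n => ⟨deriv (σn n), (contDiff_infty_iff_deriv.1 (hσn n).1).2, (hσn n).2.2,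
      fun _ _ => rfl⟩, hlim, hgrow, hgrow'⟩
end

section
/- Let U ⊂ ℝ^d be a bounded open set and T > 0. For each δ ∈ (0,1) let φ̃_δ : [0,∞) → [0,1] be a smooth nondecreasing function with φ̃_δ(ξ) = 0 for ξ ≤ δ/2 and φ̃_δ(ξ) = 1 for ξ ≥ δ, and define Ψ_δ : ℝ → ℝ by Ψ_δ(ξ) = φ̃_δ(|ξ|) ξ. Define D : L¹([0,T]; L¹(U)) × L¹([0,T]; L¹(U)) → [0,∞) by D(f, g) = Σ_{k=1}^∞ 2^{-k} ‖Ψ_{1/k}∘f − Ψ_{1/k}∘g‖_{L¹([0,T];L¹(U))} / (1 + ‖Ψ_{1/k}∘f − Ψ_{1/k}∘g‖_{L¹([0,T];L¹(U))}). Then D is a metric on L¹([0,T]; L¹(U)) (identifying functions equal almost everywhere), and the topology it defines coincides with the strong norm topology: for f_n, f ∈ L¹([0,T]; L¹(U)) one has D(f_n, f) → 0 if and only if ‖f_n − f‖_{L¹([0,T];L¹(U))} → 0. -/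
open MeasureTheory Filter Topology

/-!
The maps `Ψ_{1/k}` move every point by at most `1/k`, so on finite measure spaces composition with
them gives operators `F k` on `L¹([0,T]; L¹(U))` which converge to the identity uniformly. They are
continuous because `Ψ_{1/k}` is, by Vitali's theorem. The distance `D` induces the coarsest topology
making all `F k` continuous; since `F k → id` uniformly, that topology is the one of the norm.
-/

section SeriesDist

lemma div_one_add_le_add_of_le_add {a b c : ℝ} (ha : 0 ≤ a) (hb : 0 ≤ b) (hc : 0 ≤ c)
    (h : a ≤ b + c) : a / (1 + a) ≤ b / (1 + b) + c / (1 + c) :=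
  calc a / (1 + a) ≤ (b + c) / (1 + (b + c)) := by
        rw [div_le_div_iff₀ (by positivity) (by positivity)]
        linarith
    _ = b / (1 + (b + c)) + c / (1 + (b + c)) := add_div ..
    _ ≤ b / (1 + b) + c / (1 + c) := by gcongr <;> linarith

lemma tendsto_div_one_add_zero_iff {κ : Type*} {l : Filter κ} {u : κ → ℝ} (hu : ∀ n, 0 ≤ u n) :
    Tendsto (fun n => u n / (1 + u n)) l (𝓝 0) ↔ Tendsto u l (𝓝 0) := by
  constructor <;> intro h
  · have hinv : ∀ n, u n / (1 + u n) / (1 - u n / (1 + u n)) = u n := fun n => by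
      have : 1 + u n ≠ 0 := by linarith [hu n]
      field_simp
      ring
    have hdiv := h.div (h.const_sub 1) (by norm_num)
    rwa [sub_zero, div_one, show _ / _ = u from funext hinv] at hdiv
  · simpa using! h.div (h.const_add 1) (by norm_num)

variable {ι X : Type*} {Y : ι → Type*} [∀ i, PseudoMetricSpace (Y i)] {w : ι → ℝ}
  {F : ∀ i, X → Y i}

/-- The Fréchet-type distance `∑ i, w i * dᵢ / (1 + dᵢ)` on `X` built from the pullbacks
`dᵢ x y = dist (F i x) (F i y)` with weights `w`. -/
noncomputable def seriesDist (w : ι → ℝ) (F : ∀ i, X → Y i) (x y : X) : ℝ :=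
  ∑' i, w i * (dist (F i x) (F i y) / (1 + dist (F i x) (F i y)))

lemma seriesDist_comm (x y : X) : seriesDist w F x y = seriesDist w F y x := by
  simp only [seriesDist, dist_comm]

lemma seriesDist_term_nonneg (hw₀ : ∀ i, 0 ≤ w i) (x y : X) (i : ι) :
    0 ≤ w i * (dist (F i x) (F i y) / (1 + dist (F i x) (F i y))) :=
  mul_nonneg (hw₀ i) (by positivity)

lemma seriesDist_term_le (hw₀ : ∀ i, 0 ≤ w i) (x y : X) (i : ι) :
    w i * (dist (F i x) (F i y) / (1 + dist (F i x) (F i y))) ≤ w i :=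
  mul_le_of_le_one_right (hw₀ i) (div_le_one_of_le₀ (by linarith) (by positivity))

lemma summable_seriesDist (hw : Summable w) (hw₀ : ∀ i, 0 ≤ w i) (x y : X) :
    Summable fun i => w i * (dist (F i x) (F i y) / (1 + dist (F i x) (F i y))) :=
  .of_nonneg_of_le (seriesDist_term_nonneg hw₀ x y) (seriesDist_term_le hw₀ x y) hw

lemma seriesDist_triangle (hw : Summable w) (hw₀ : ∀ i, 0 ≤ w i) (x y z : X) :
    seriesDist w F x z ≤ seriesDist w F x y + seriesDist w F y z := by
  have hs := fun x y => summable_seriesDist (F := F) hw hw₀ x y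
  rw [seriesDist, seriesDist, seriesDist, ← (hs x y).tsum_add (hs y z)]
  refine (hs x z).tsum_le_tsum (fun i => ?_) ((hs x y).add (hs y z))
  rw [← mul_add]
  exact mul_le_mul_of_nonneg_left
    (div_one_add_le_add_of_le_add dist_nonneg dist_nonneg dist_nonneg (dist_triangle ..)) (hw₀ i)

lemma seriesDist_eq_zero_iff (hw : Summable w) (hw₀ : ∀ i, 0 < w i) {x y : X} :
    seriesDist w F x y = 0 ↔ ∀ i, dist (F i x) (F i y) = 0 := by
  have hw₀' := fun i => (hw₀ i).le
  rw [seriesDist, ← (summable_seriesDist hw hw₀' x y).hasSum_iff,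
    hasSum_zero_iff_of_nonneg (seriesDist_term_nonneg hw₀' x y), funext_iff]
  refine forall_congr' fun i => ?_
  have : 1 + dist (F i x) (F i y) ≠ 0 := by positivity
  simp only [Pi.zero_apply, mul_eq_zero, (hw₀ i).ne', div_eq_zero_iff, this, false_or, or_false]

lemma tendsto_seriesDist_zero_iff (hw : Summable w) (hw₀ : ∀ i, 0 < w i) {κ : Type*}
    {l : Filter κ} {u : κ → X} {x : X} :
    Tendsto (fun n => seriesDist w F (u n) x) l (𝓝 0) ↔
      ∀ i, Tendsto (fun n => F i (u n)) l (𝓝 (F i x)) := by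
  have hw₀' := fun i => (hw₀ i).le
  have hterm (i : ι) : Tendsto (fun n => F i (u n)) l (𝓝 (F i x)) ↔
      Tendsto (fun n => w i * (dist (F i (u n)) (F i x) / (1 + dist (F i (u n)) (F i x)))) l
        (𝓝 0) := by
    rw [tendsto_iff_dist_tendsto_zero, ← tendsto_div_one_add_zero_iff fun _ => dist_nonneg,
      ← tendsto_const_smul_iff₀ (hw₀ i).ne', smul_zero]
    simp only [smul_eq_mul]
  simp only [hterm]
  constructor <;> intro h
  · exact fun i => squeeze_zero (fun n => seriesDist_term_nonneg hw₀' (u n) x i)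
      (fun n => (summable_seriesDist hw hw₀' (u n) x).le_tsum i
        fun j _ => seriesDist_term_nonneg hw₀' (u n) x j) h
  · simpa only [tsum_zero] using! tendsto_tsum_of_dominated_convergence hw h
      (.of_forall fun n i => by
        rw [Real.norm_of_nonneg (seriesDist_term_nonneg hw₀' (u n) x i)]
        exact seriesDist_term_le hw₀' (u n) x i)

end SeriesDist

section UniformApproximation

variable {ι X : Type*} {F : ι → X → X} {p : Filter ι}

lemma tendstoUniformly_id_of_norm_sub_le [SeminormedAddCommGroup X] {ε : ι → ℝ}
    (hF : ∀ i x, ‖F i x - x‖ ≤ ε i) (hε : Tendsto ε p (𝓝 0)) : TendstoUniformly F id p := by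
  refine Metric.tendstoUniformly_iff.2 fun r hr => ?_
  filter_upwards [hε.eventually_lt_const hr] with i hi x
  rw [id, dist_comm, dist_eq_norm]
  exact (hF i x).trans_lt hi

lemma forall_tendsto_iff_of_tendstoUniformly_id [UniformSpace X] [p.NeBot]
    (hF : ∀ i, Continuous (F i)) (hFp : TendstoUniformly F id p) {κ : Type*} {l : Filter κ}
    {u : κ → X} {x : X} :
    (∀ i, Tendsto (fun n => F i (u n)) l (𝓝 (F i x))) ↔ Tendsto u l (𝓝 x) :=
  ⟨fun h => (hFp.comp u).tendsto_of_eventually_tendsto (.of_forall h) (hFp.tendsto_at x),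
    fun h i => ((hF i).tendsto x).comp h⟩

end UniformApproximation

section Superposition

open scoped ENNReal

variable {α E : Type*} [MeasurableSpace α] {μ : Measure α} [IsFiniteMeasure μ]
  [NormedAddCommGroup E] {p : ℝ≥0∞} {ψ : E → E} {c : ℝ}

lemma unifIntegrable_of_norm_le {ι : Type*} (hp : 1 ≤ p) (hp' : p ≠ ∞) {f : ι → α → E}
    (hf : ∀ i x, ‖f i x‖ ≤ c) : UnifIntegrable f p μ := by
  intro ε hε
  obtain ⟨δ, hδ, h⟩ := unifIntegrable_const (ι := ι) hp hp' (memLp_const (μ := μ) c) hε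
  refine ⟨δ, hδ, fun i s hs hμs => (eLpNorm_mono fun x => ?_).trans (h i s hs hμs)⟩
  by_cases hx : x ∈ s
  · simpa only [Set.indicator_of_mem hx] using (hf i x).trans (Real.le_norm_self c)
  · simp only [Set.indicator_of_notMem hx, norm_zero, le_refl]

lemma memLp_comp_of_norm_sub_le (hψ : Continuous ψ) (hc : ∀ x, ‖ψ x - x‖ ≤ c) {f : α → E}
    (hf : MemLp f p μ) : MemLp (fun t => ψ (f t)) p μ := by
  have hdiff : MemLp (fun t => ψ (f t) - f t) p μ :=
    .of_bound ((hψ.comp_aestronglyMeasurable hf.1).sub hf.1) c (.of_forall fun t => hc (f t))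
  simpa only [Pi.add_def, sub_add_cancel] using hdiff.add hf

lemma unifIntegrable_comp_of_norm_sub_le {ι : Type*} (hp : 1 ≤ p) (hp' : p ≠ ∞)
    (hψ : Continuous ψ) (hc : ∀ x, ‖ψ x - x‖ ≤ c) {f : ι → α → E}
    (hf : ∀ i, AEStronglyMeasurable (f i) μ) (hfp : UnifIntegrable f p μ) :
    UnifIntegrable (fun i t => ψ (f i t)) p μ := by
  have hdiff : UnifIntegrable (fun i t => ψ (f i t) - f i t) p μ :=
    unifIntegrable_of_norm_le hp hp' fun i t => hc (f i t)
  simpa only [Pi.add_def, sub_add_cancel] using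
    hdiff.add hfp hp (fun i => (hψ.comp_aestronglyMeasurable (hf i)).sub (hf i)) hf

/-- The superposition (Nemytskii) operator `f ↦ ψ ∘ f` on `Lᵖ(μ; E)`, for a continuous `ψ` at
bounded distance from the identity, which on a finite measure space makes `ψ ∘ f` an `Lᵖ`
function. -/
noncomputable def superposition (hψ : Continuous ψ) (hc : ∀ x, ‖ψ x - x‖ ≤ c) (f : Lp E p μ) :
    Lp E p μ :=
  (memLp_comp_of_norm_sub_le hψ hc (Lp.memLp f)).toLp _

variable (hψ : Continuous ψ) (hc : ∀ x, ‖ψ x - x‖ ≤ c)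

lemma coeFn_superposition (f : Lp E p μ) :
    superposition hψ hc f =ᵐ[μ] fun t => ψ (f t) :=
  MemLp.coeFn_toLp _

lemma norm_superposition_sub_self_le [Fact (1 ≤ p)] (f : Lp E p μ) :
    ‖superposition hψ hc f - f‖ ≤ measureUnivNNReal μ ^ p.toReal⁻¹ * c := by
  refine Lp.norm_le_of_ae_bound ((norm_nonneg _).trans (hc 0)) ?_
  filter_upwards [Lp.coeFn_sub (superposition hψ hc f) f, coeFn_superposition hψ hc f] with t h h'
  rw [h, Pi.sub_apply, h']
  exact hc (f t)

lemma dist_superposition (f g : Lp E 1 μ) :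
    dist (superposition hψ hc f) (superposition hψ hc g) = ∫ t, ‖ψ (f t) - ψ (g t)‖ ∂μ := by
  rw [L1.dist_eq_integral_dist]
  refine integral_congr_ae ?_
  filter_upwards [coeFn_superposition hψ hc f, coeFn_superposition hψ hc g] with t hf hg
  rw [hf, hg, dist_eq_norm]

lemma continuous_superposition [hp : Fact (1 ≤ p)] (hp' : p ≠ ∞) :
    Continuous (superposition hψ hc : Lp E p μ → Lp E p μ) := by
  refine continuous_iff_seqContinuous.2 fun fs f hfs => tendsto_of_subseq_tendsto fun ns hns => ?_
  obtain ⟨ms, hms, hae⟩ := (tendstoInMeasure_of_tendsto_Lp (hfs.comp hns)).exists_seq_tendsto_ae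
  have hui : UnifIntegrable (fun n => fs (ns (ms n))) p μ :=
    unifIntegrable_of_tendsto_Lp hp.out hp' (fun n => Lp.memLp _) (Lp.memLp f)
      ((Lp.tendsto_Lp_iff_tendsto_eLpNorm' _ f).1 (hfs.comp (hns.comp hms.tendsto_atTop)))
  refine ⟨ms, (Lp.tendsto_Lp_iff_tendsto_eLpNorm'' _
    (fun n => memLp_comp_of_norm_sub_le hψ hc (Lp.memLp _)) _ _).2 ?_⟩
  refine tendsto_Lp_finite_of_tendsto_ae hp.out hp'
    (fun n => hψ.comp_aestronglyMeasurable (Lp.aestronglyMeasurable _))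
    (memLp_comp_of_norm_sub_le hψ hc (Lp.memLp f))
    (unifIntegrable_comp_of_norm_sub_le hp.out hp' hψ hc (fun n => Lp.aestronglyMeasurable _)
      hui) ?_
  filter_upwards [hae] with t ht
  exact (hψ.tendsto _).comp ht

end Superposition

lemma norm_radial_smul_sub_self_le {E : Type*} [SeminormedAddCommGroup E] [NormedSpace ℝ E]
    {φ : ℝ → ℝ} {δ : ℝ} (hδ : 0 ≤ δ) (hrange : ∀ r ≥ 0, φ r ∈ Set.Icc 0 1)
    (hone : ∀ r, δ ≤ r → φ r = 1) (ξ : E) : ‖φ ‖ξ‖ • ξ - ξ‖ ≤ δ := by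
  rcases le_total ‖ξ‖ δ with h | h
  · obtain ⟨hφ₀, hφ₁⟩ := hrange ‖ξ‖ (norm_nonneg ξ)
    calc ‖φ ‖ξ‖ • ξ - ξ‖ = ‖(φ ‖ξ‖ - 1) • ξ‖ := by rw [sub_smul, one_smul]
      _ = (1 - φ ‖ξ‖) * ‖ξ‖ := by
        rw [norm_smul, Real.norm_of_nonpos (sub_nonpos.2 hφ₁), neg_sub]
      _ ≤ 1 * ‖ξ‖ := by gcongr; linarith
      _ ≤ δ := by rwa [one_mul]
  · rwa [hone _ h, one_smul, sub_self, norm_zero]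

theorem cutoff_metric_on_L1L1_general {α β E : Type*} [MeasurableSpace α] [MeasurableSpace β]
    [NormedAddCommGroup E] (μ : Measure α) [IsFiniteMeasure μ] (ν : Measure β) [IsFiniteMeasure ν]
    (w : ℕ → ℝ) (hw : Summable w) (hw₀ : ∀ k, 0 < w k)
    (Ψ : ℕ → E → E) (hΨ : ∀ k, Continuous (Ψ k))
    (δ : ℕ → ℝ) (hδ : Tendsto δ atTop (𝓝 0)) (hΨδ : ∀ k ξ, ‖Ψ k ξ - ξ‖ ≤ δ k)
    (D : Lp (Lp E 1 ν) 1 μ → Lp (Lp E 1 ν) 1 μ → ℝ)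
    (hD : ∀ f g, D f g = ∑' k, w k * ((∫ t, ∫ x, ‖Ψ k (f t x) - Ψ k (g t x)‖ ∂ν ∂μ) /
      (1 + ∫ t, ∫ x, ‖Ψ k (f t x) - Ψ k (g t x)‖ ∂ν ∂μ))) :
    (∀ f g, D f g = 0 ↔ f = g) ∧
    (∀ f g, D f g = D g f) ∧
    (∀ f g h, D f h ≤ D f g + D g h) ∧
    (∀ (fs : ℕ → Lp (Lp E 1 ν) 1 μ) (f : Lp (Lp E 1 ν) 1 μ),
      Tendsto (fun n => D (fs n) f) atTop (𝓝 0) ↔ Tendsto (fun n => ‖fs n - f‖) atTop (𝓝 0)) := by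
  have hG (k : ℕ) : Continuous (superposition (hΨ k) (hΨδ k) : Lp E 1 ν → Lp E 1 ν) :=
    continuous_superposition _ _ ENNReal.one_ne_top
  have hGδ (k : ℕ) := norm_superposition_sub_self_le (μ := ν) (p := 1) (hΨ k) (hΨδ k)
  let F (k : ℕ) : Lp (Lp E 1 ν) 1 μ → Lp (Lp E 1 ν) 1 μ := superposition (hG k) (hGδ k)
  have hF (k : ℕ) : Continuous (F k) := continuous_superposition _ _ ENNReal.one_ne_top
  have hFid : TendstoUniformly F id atTop :=
    tendstoUniformly_id_of_norm_sub_le (fun k => norm_superposition_sub_self_le (hG k) (hGδ k))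
      (by simpa only [mul_zero] using (hδ.const_mul _).const_mul _)
  obtain rfl : D = seriesDist w F := by
    funext f g
    simp only [hD, seriesDist, F, dist_superposition, ← dist_eq_norm]
  refine ⟨fun f g => ?_, seriesDist_comm, seriesDist_triangle hw fun k => (hw₀ k).le,
    fun fs f => ?_⟩
  · rw [seriesDist_eq_zero_iff hw hw₀]
    refine ⟨fun h => tendsto_nhds_unique (hFid.tendsto_at f) ?_, fun h => by simp [h]⟩
    simpa only [dist_eq_zero.1 (h _), id] using hFid.tendsto_at g
  · rw [tendsto_seriesDist_zero_iff hw hw₀, forall_tendsto_iff_of_tendstoUniformly_id hF hFid,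
      tendsto_iff_norm_sub_tendsto_zero]

/-- The function
`D(f,g) = Σ_k 2^{-k} ‖Ψ_{1/k}∘f - Ψ_{1/k}∘g‖_{L¹_tL¹_x} / (1 + ‖Ψ_{1/k}∘f - Ψ_{1/k}∘g‖_{L¹_tL¹_x})`
is a metric on `L¹([0,T]; L¹(U))` whose topology coincides with the strong norm topology. -/
theorem cutoff_metric_on_L1L1
    (d : ℕ) (U : Set (EuclideanSpace ℝ (Fin d)))
    (hUopen : IsOpen U) (hUbdd : Bornology.IsBounded U)
    (T : ℝ) (hT : 0 < T)
    -- the family of smooth cutoffs `φ̃_δ`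
    (φt : ℝ → ℝ → ℝ)
    (hsmooth : ∀ δ ∈ Set.Ioc (0:ℝ) 1, ContDiff ℝ (⊤ : ℕ∞) (φt δ))
    (hmono : ∀ δ ∈ Set.Ioc (0:ℝ) 1, MonotoneOn (φt δ) (Set.Ici 0))
    (hrange : ∀ δ ∈ Set.Ioc (0:ℝ) 1, ∀ ξ ≥ (0:ℝ), φt δ ξ ∈ Set.Icc (0:ℝ) 1)
    (hzero : ∀ δ ∈ Set.Ioc (0:ℝ) 1, ∀ ξ ≥ (0:ℝ), ξ ≤ δ / 2 → φt δ ξ = 0)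
    (hone : ∀ δ ∈ Set.Ioc (0:ℝ) 1, ∀ ξ : ℝ, δ ≤ ξ → φt δ ξ = 1)
    -- `Ψ_δ(ξ) = φ̃_δ(|ξ|) ξ`
    (Ψ : ℝ → ℝ → ℝ) (hΨ : ∀ δ ξ, Ψ δ ξ = φt δ |ξ| * ξ)
    -- `D` on the Bochner space `L¹([0,T]; L¹(U))`
    (D : Lp (Lp ℝ 1 (volume.restrict U)) 1 (volume.restrict (Set.Icc (0:ℝ) T)) →
      Lp (Lp ℝ 1 (volume.restrict U)) 1 (volume.restrict (Set.Icc (0:ℝ) T)) → ℝ)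
    (hD : ∀ f g, D f g = ∑' k : ℕ,
      (2:ℝ)⁻¹ ^ (k + 1) *
        ((∫ t in Set.Icc (0:ℝ) T, ∫ x in U,
            |Ψ ((k:ℝ) + 1)⁻¹ (f t x) - Ψ ((k:ℝ) + 1)⁻¹ (g t x)|) /
         (1 + ∫ t in Set.Icc (0:ℝ) T, ∫ x in U,
            |Ψ ((k:ℝ) + 1)⁻¹ (f t x) - Ψ ((k:ℝ) + 1)⁻¹ (g t x)|))) :
    -- `D` is a metric
    (∀ f g, D f g = 0 ↔ f = g) ∧
    (∀ f g, D f g = D g f) ∧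
    (∀ f g h, D f h ≤ D f g + D g h) ∧
    -- the topology of `D` coincides with the strong norm topology
    (∀ (fs : ℕ → Lp (Lp ℝ 1 (volume.restrict U)) 1 (volume.restrict (Set.Icc (0:ℝ) T)))
      (f : Lp (Lp ℝ 1 (volume.restrict U)) 1 (volume.restrict (Set.Icc (0:ℝ) T))),
      Tendsto (fun n => D (fs n) f) atTop (𝓝 0) ↔
        Tendsto (fun n => ‖fs n - f‖) atTop (𝓝 0)) := by
  have : IsFiniteMeasure (volume.restrict U) :=
    isFiniteMeasure_restrict.2 hUbdd.measure_lt_top.ne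
  have hmem (k : ℕ) : ((k : ℝ) + 1)⁻¹ ∈ Set.Ioc (0 : ℝ) 1 :=
    ⟨by positivity, inv_le_one_of_one_le₀ (by simp)⟩
  refine cutoff_metric_on_L1L1_general _ _ _
    ((summable_nat_add_iff 1).2 (summable_geometric_of_lt_one (by norm_num) (by norm_num)))
    (fun k => by positivity) (fun k => Ψ ((k : ℝ) + 1)⁻¹) (fun k => ?_) _
    (by simpa only [one_div] using tendsto_one_div_add_atTop_nhds_zero_nat (𝕜 := ℝ))
    (fun k ξ => ?_) D hD
  · rw [funext (hΨ _)]
    exact ((hsmooth _ (hmem k)).continuous.comp continuous_abs).mul continuous_id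
  · rw [hΨ]
    exact norm_radial_smul_sub_self_le (hmem k).1.le (hrange _ (hmem k)) (hone _ (hmem k)) ξ
end

section
/- Let (Ω, ℱ, ℙ) be a probability space and X̄ a complete separable metric space. A sequence (X_n) of X̄-valued random variables converges in probability (to some X̄-valued random variable) as n → ∞ if and only if the following holds: for every pair of sequences of indices (n_k, m_k)_{k=1}^∞ with n_k → ∞ and m_k → ∞ as k → ∞, there is a further subsequence (n_{k'}, m_{k'})_{k'=1}^∞ such that the joint laws of the pairs (X_{n_{k'}}, X_{m_{k'}}) converge weakly, as k' → ∞, to a probability measure μ on X̄ × X̄ satisfying μ({(x, y) ∈ X̄ × X̄ : x = y}) = 1. -/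
open MeasureTheory Filter Topology

/-!
Convergence in probability passes to pairs: if `X → Y`, then `(X ∘ n, X ∘ m) → (Y, Y)` in
probability, hence in law, and the law of `(Y, Y)` lives on the diagonal.

Conversely, `{(x, y) | ε ≤ d(x, y)}` is closed and misses the diagonal, so by the portmanteau
theorem its mass under the joint laws vanishes along every such subsequence: `X` is Cauchy in
probability. By Borel–Cantelli a fast subsequence is then almost surely Cauchy, completeness
provides its limit, and the Cauchy property brings the whole sequence to that limit.
-/

open scoped ENNReal BoundedContinuousFunction

section CauchyInMeasure

variable {Ω E ι κ : Type*} {mΩ : MeasurableSpace Ω} {P : Measure Ω}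
  {X : ι → Ω → E} {l : Filter ι} {v : Filter κ}

/-- A family of functions is *Cauchy in measure* along a filter `l` if the distance between two of
its members tends to `0` in measure as both indices tend to `l` independently. As in
`TendstoInMeasure`, the level `ε` ranges over the extended nonnegative reals. -/
def CauchyInMeasure [EDist E] (P : Measure Ω) (X : ι → Ω → E) (l : Filter ι) : Prop :=
  ∀ ε, 0 < ε →
    Tendsto (fun p : ι × ι ↦ P {ω | ε ≤ edist (X p.1 ω) (X p.2 ω)}) (l ×ˢ l) (𝓝 0)

theorem CauchyInMeasure.comp [EDist E] {u : κ → ι} (h : CauchyInMeasure P X l)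
    (hu : Tendsto u v l) : CauchyInMeasure P (X ∘ u) v :=
  fun ε hε ↦ (h ε hε).comp (hu.prodMap hu)

theorem cauchyInMeasure_of_forall_exists_subseq [EDist E] [l.IsCountablyGenerated]
    (h : ∀ n m : ℕ → ι, Tendsto n atTop l → Tendsto m atTop l → ∃ φ : ℕ → ℕ, ∀ ε, 0 < ε →
      Tendsto (fun k ↦ P {ω | ε ≤ edist (X (n (φ k)) ω) (X (m (φ k)) ω)}) atTop (𝓝 0)) :
    CauchyInMeasure P X l := by
  intro ε hε
  refine tendsto_of_subseq_tendsto fun p hp ↦ ?_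
  obtain ⟨φ, hφ⟩ := h (fun k ↦ (p k).1) (fun k ↦ (p k).2) (tendsto_fst.comp hp)
    (tendsto_snd.comp hp)
  exact ⟨φ, hφ ε hε⟩

variable [PseudoEMetricSpace E]

theorem ae_cauchySeq_of_tsum_measure_ne_top {X : ℕ → Ω → E} {δ : ℕ → ℝ≥0∞} (hδ : ∑' k, δ k ≠ ∞)
    (hX : ∑' k, P {ω | δ k ≤ edist (X k ω) (X (k + 1) ω)} ≠ ∞) :
    ∀ᵐ ω ∂P, CauchySeq (fun k ↦ X k ω) := by
  filter_upwards [ae_eventually_notMem hX] with ω hω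
  obtain ⟨N, hN⟩ := eventually_atTop.1 hω
  have tail_summable : ∑' k, δ (k + N) ≠ ∞ :=
    ne_top_of_le_ne_top hδ (ENNReal.tsum_comp_le_tsum_of_injective (add_left_injective N) δ)
  refine (cauchySeq_shift N).1 (cauchySeq_of_edist_le_of_tsum_ne_top _ (fun k ↦ ?_) tail_summable)
  rw [Nat.succ_eq_add_one, Nat.add_right_comm]
  exact (not_le.1 (hN (k + N) (Nat.le_add_left N k))).le

theorem CauchyInMeasure.exists_seq_ae_cauchySeq [l.NeBot] [l.IsCountablyGenerated]
    (h : CauchyInMeasure P X l) :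
    ∃ u : ℕ → ι, Tendsto u atTop l ∧ ∀ᵐ ω ∂P, CauchySeq (fun k ↦ X (u k) ω) := by
  obtain ⟨u, hu⟩ := exists_seq_tendsto l
  have geometric_pos (k : ℕ) : 0 < (2⁻¹ : ℝ≥0∞) ^ k := ENNReal.pow_pos (by simp) k
  have summable_geometric : ∑' k : ℕ, (2⁻¹ : ℝ≥0∞) ^ k ≠ ∞ := by simp [ENNReal.tsum_geometric]
  have eventually_close (k : ℕ) : ∀ᶠ N in atTop, ∀ i ≥ N, ∀ j ≥ N,
      P {ω | 2⁻¹ ^ k ≤ edist (X (u i) ω) (X (u j) ω)} ≤ 2⁻¹ ^ k := by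
    have := (h.comp hu _ (geometric_pos k)).eventually_le_const (geometric_pos k)
    rw [prod_atTop_atTop_eq] at this
    obtain ⟨N, hN⟩ := eventually_atTop_prod_self.1 this
    filter_upwards [eventually_ge_atTop N] with M hM i hi j hj
    exact hN i j (hM.trans hi) (hM.trans hj)
  obtain ⟨φ, hφ, close⟩ := extraction_forall_of_eventually eventually_close
  refine ⟨u ∘ φ, hu.comp hφ.tendsto_atTop,
    ae_cauchySeq_of_tsum_measure_ne_top summable_geometric
      (ne_top_of_le_ne_top summable_geometric (ENNReal.tsum_le_tsum fun k ↦ ?_))⟩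
  exact close k _ le_rfl _ (hφ.monotone k.le_succ)

theorem CauchyInMeasure.tendstoInMeasure_of_comp [v.NeBot] {u : κ → ι} {Y : Ω → E}
    (h : CauchyInMeasure P X l) (hu : Tendsto u v l) (hY : TendstoInMeasure P (X ∘ u) v Y) :
    TendstoInMeasure P X l Y := by
  intro ε hε
  have hε' : 0 < ε / 2 := ENNReal.half_pos hε.ne'
  have bound (i : ι) (k : κ) : P {ω | ε ≤ edist (X i ω) (Y ω)} ≤
      P {ω | ε / 2 ≤ edist (X i ω) (X (u k) ω)} + P {ω | ε / 2 ≤ edist (X (u k) ω) (Y ω)} := by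
    refine (measure_mono fun ω (hω : ε ≤ _) ↦ ?_).trans (measure_union_le _ _)
    by_contra! hlt
    simp only [Set.mem_union, Set.mem_ofPred_eq, not_or, not_le] at hlt
    refine hω.not_gt ((edist_triangle _ (X (u k) ω) _).trans_lt ?_)
    exact (ENNReal.add_lt_add hlt.1 hlt.2).trans_eq (ENNReal.add_halves ε)
  have bound_tendsto : Tendsto (fun p : ι × κ ↦ P {ω | ε / 2 ≤ edist (X p.1 ω) (X (u p.2) ω)} +
      P {ω | ε / 2 ≤ edist (X (u p.2) ω) (Y ω)}) (l ×ˢ v) (𝓝 0) := by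
    simpa using ((h _ hε').comp (tendsto_id.prodMap hu)).add ((hY _ hε').comp tendsto_snd)
  rw [← map_fst_prod l v, tendsto_map'_iff]
  exact tendsto_of_tendsto_of_tendsto_of_le_of_le tendsto_const_nhds bound_tendsto
    (fun _ ↦ zero_le) (fun p ↦ bound p.1 p.2)

theorem CauchyInMeasure.exists_stronglyMeasurable_tendstoInMeasure [CompleteSpace E]
    [IsFiniteMeasure P] [l.NeBot] [l.IsCountablyGenerated]
    (h : CauchyInMeasure P X l) (hX : ∀ i, AEStronglyMeasurable (X i) P) :
    ∃ Y : Ω → E, StronglyMeasurable Y ∧ TendstoInMeasure P X l Y := by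
  obtain ⟨u, hu, hcauchy⟩ := h.exists_seq_ae_cauchySeq
  obtain ⟨Y, hY, hlim⟩ := exists_stronglyMeasurable_limit_of_tendsto_ae (fun k ↦ hX (u k))
    (hcauchy.mono fun _ ↦ cauchySeq_tendsto_of_complete)
  exact ⟨Y, hY, h.tendstoInMeasure_of_comp hu
    (tendstoInMeasure_of_tendsto_ae (fun k ↦ hX (u k)) hlim)⟩

end CauchyInMeasure

theorem tendstoInMeasure_prodMk {Ω E F ι : Type*} {mΩ : MeasurableSpace Ω} {P : Measure Ω}
    [PseudoEMetricSpace E] [PseudoEMetricSpace F] {l : Filter ι}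
    {X : ι → Ω → E} {X' : Ω → E} {Y : ι → Ω → F} {Y' : Ω → F}
    (hX : TendstoInMeasure P X l X') (hY : TendstoInMeasure P Y l Y') :
    TendstoInMeasure P (fun i ω ↦ (X i ω, Y i ω)) l (fun ω ↦ (X' ω, Y' ω)) := by
  intro ε hε
  have hsum := (hX ε hε).add (hY ε hε)
  rw [add_zero] at hsum
  refine tendsto_of_tendsto_of_tendsto_of_le_of_le tendsto_const_nhds hsum (fun _ ↦ zero_le)
    (fun i ↦ ?_)
  simp only [Prod.edist_eq, le_max_iff, Set.ofPred_or]
  exact measure_union_le _ _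

section TendstoInDistribution

variable {ι Ω' S : Type*} {Ω : ι → Type*} {mΩ : ∀ i, MeasurableSpace (Ω i)}
  {P : (i : ι) → Measure (Ω i)} [∀ i, IsProbabilityMeasure (P i)]
  {mΩ' : MeasurableSpace Ω'} {Q : Measure Ω'} [IsProbabilityMeasure Q]
  {l : Filter ι}

theorem tendstoInDistribution_iff_forall_integral_tendsto
    [TopologicalSpace S] [MeasurableSpace S] [OpensMeasurableSpace S]
    {Z : (i : ι) → Ω i → S} {W : Ω' → S}
    (hZ : ∀ i, AEMeasurable (Z i) (P i)) (hW : AEMeasurable W Q) :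
    TendstoInDistribution Z l W P Q ↔
      ∀ F : S →ᵇ ℝ, Tendsto (fun i ↦ ∫ ω, F (Z i ω) ∂P i) l (𝓝 (∫ ω, F (W ω) ∂Q)) := by
  have integral_law (F : S →ᵇ ℝ) (i : ι) :
      ∫ s, F s ∂(P i).map (Z i) = ∫ ω, F (Z i ω) ∂P i :=
    integral_map (hZ i) F.continuous.measurable.aestronglyMeasurable
  have integral_law_limit (F : S →ᵇ ℝ) : ∫ s, F s ∂Q.map W = ∫ ω, F (W ω) ∂Q :=
    integral_map hW F.continuous.measurable.aestronglyMeasurable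
  simp only [← integral_law, ← integral_law_limit]
  exact ⟨fun h ↦ ProbabilityMeasure.tendsto_iff_forall_integral_tendsto.1 h.tendsto,
    fun h ↦ ⟨hZ, hW, ProbabilityMeasure.tendsto_iff_forall_integral_tendsto.2 h⟩⟩

theorem tendsto_measure_mem_isClosed_of_tendstoInDistribution
    [TopologicalSpace S] [MeasurableSpace S] [OpensMeasurableSpace S] [HasOuterApproxClosed S]
    {Z : (i : ι) → Ω i → S} {W : Ω' → S} {C : Set S}
    (h : TendstoInDistribution Z l W P Q) (hC : IsClosed C) (hWC : ∀ᵐ ω ∂Q, W ω ∉ C) :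
    Tendsto (fun i ↦ P i {ω | Z i ω ∈ C}) l (𝓝 0) := by
  have law_limit_eq_zero : Q.map W C = 0 := by
    rw [Measure.map_apply_of_aemeasurable h.aemeasurable_limit hC.measurableSet]
    exact measure_eq_zero_iff_ae_notMem.2 hWC
  have law_limsup := ProbabilityMeasure.limsup_measure_closed_le_of_tendsto h.tendsto hC
  simp only [ProbabilityMeasure.coe_mk, law_limit_eq_zero,
    Measure.map_apply_of_aemeasurable (h.forall_aemeasurable _) hC.measurableSet] at law_limsup
  exact tendsto_of_le_liminf_of_limsup_le zero_le law_limsup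

theorem tendsto_measure_le_edist_of_tendstoInDistribution_diagonal [PseudoEMetricSpace S]
    [MeasurableSpace S] [OpensMeasurableSpace (S × S)]
    {U V : (i : ι) → Ω i → S} {W : Ω' → S × S}
    (h : TendstoInDistribution (fun i ω ↦ (U i ω, V i ω)) l W P Q)
    (hW : ∀ᵐ ω ∂Q, (W ω).1 = (W ω).2) {ε : ℝ≥0∞} (hε : 0 < ε) :
    Tendsto (fun i ↦ P i {ω | ε ≤ edist (U i ω) (V i ω)}) l (𝓝 0) := by
  have far_isClosed : IsClosed {p : S × S | ε ≤ edist p.1 p.2} :=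
    isClosed_le continuous_const continuous_edist
  refine tendsto_measure_mem_isClosed_of_tendstoInDistribution h far_isClosed ?_
  filter_upwards [hW] with ω hω
  simpa [hω] using hε.ne'

end TendstoInDistribution

theorem convergence_in_probability_iff_joint_laws_general
    {Ω E ι : Type*} [MeasurableSpace Ω] {P : Measure Ω} [IsProbabilityMeasure P]
    [EMetricSpace E] [CompleteSpace E] [SecondCountableTopology E]
    [MeasurableSpace E] [BorelSpace E]
    {l : Filter ι} [l.NeBot] [l.IsCountablyGenerated]
    {X : ι → Ω → E} (hX : ∀ i, AEMeasurable (X i) P) :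
    (∃ Y : Ω → E, Measurable Y ∧ TendstoInMeasure P X l Y) ↔
    (∀ n m : ℕ → ι, Tendsto n atTop l → Tendsto m atTop l →
      ∃ φ : ℕ → ℕ, StrictMono φ ∧
        ∃ μ : Measure (E × E), IsProbabilityMeasure μ ∧
          μ {p : E × E | p.1 = p.2} = 1 ∧
          ∀ F : (E × E) →ᵇ ℝ,
            Tendsto (fun k ↦ ∫ ω, F (X (n (φ k)) ω, X (m (φ k)) ω) ∂P) atTop
              (𝓝 (∫ p, F p ∂μ))) := by
  have diagonal_measurable : MeasurableSet {p : E × E | p.1 = p.2} :=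
    measurableSet_eq_fun measurable_fst measurable_snd
  constructor
  · rintro ⟨Y, hY, hXY⟩ n m hn hm
    have hYY : Measurable (fun ω ↦ (Y ω, Y ω)) := hY.prodMk hY
    have joint := (tendstoInMeasure_prodMk (hXY.comp hn) (hXY.comp hm)).tendstoInDistribution
      (by fun_prop)
    refine ⟨id, strictMono_id, P.map (fun ω ↦ (Y ω, Y ω)),
      Measure.isProbabilityMeasure_map hYY.aemeasurable, ?_, fun F ↦ ?_⟩
    · simp [Measure.map_apply hYY diagonal_measurable]
    · rw [integral_map hYY.aemeasurable F.continuous.aestronglyMeasurable]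
      exact (tendstoInDistribution_iff_forall_integral_tendsto joint.forall_aemeasurable
        joint.aemeasurable_limit).1 joint F
  · intro h
    have hcauchy : CauchyInMeasure P X l := by
      refine cauchyInMeasure_of_forall_exists_subseq fun n m hn hm ↦ ?_
      obtain ⟨φ, -, μ, _, hdiag, hlim⟩ := h n m hn hm
      have joint := (tendstoInDistribution_iff_forall_integral_tendsto
        (by fun_prop) aemeasurable_id).2 hlim
      exact ⟨φ, fun ε ↦ tendsto_measure_le_edist_of_tendstoInDistribution_diagonal joint
        ((prob_compl_eq_zero_iff diagonal_measurable).2 hdiag)⟩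
    obtain ⟨Y, hY, hXY⟩ := hcauchy.exists_stronglyMeasurable_tendstoInMeasure
      fun i ↦ (hX i).aestronglyMeasurable
    exact ⟨Y, hY.measurable, hXY⟩

/-- Gyöngy–Krylov.  A sequence of random variables with values in a complete
separable metric space converges in probability if and only if every pair of diverging index
sequences admits a subsequence along which the joint laws converge weakly to a probability
measure concentrated on the diagonal. -/
theorem convergence_in_probability_iff_joint_laws
    (Ω : Type*) [MeasurableSpace Ω] (ℙ : Measure Ω) [IsProbabilityMeasure ℙ]
    (Xb : Type*) [MetricSpace Xb] [CompleteSpace Xb] [TopologicalSpace.SeparableSpace Xb]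
    [MeasurableSpace Xb] [BorelSpace Xb]
    (X : ℕ → Ω → Xb) (hX : ∀ n, Measurable (X n)) :
    (∃ Y : Ω → Xb, Measurable Y ∧ TendstoInMeasure ℙ X atTop Y) ↔
    (∀ n m : ℕ → ℕ, Tendsto n atTop atTop → Tendsto m atTop atTop →
      ∃ φ : ℕ → ℕ, StrictMono φ ∧
        ∃ μ : Measure (Xb × Xb), IsProbabilityMeasure μ ∧
          μ {p : Xb × Xb | p.1 = p.2} = 1 ∧
          ∀ F : BoundedContinuousFunction (Xb × Xb) ℝ,
            Tendsto (fun k => ∫ ω, F (X (n (φ k)) ω, X (m (φ k)) ω) ∂ℙ) atTop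
              (𝓝 (∫ p, F p ∂μ))) := by
  have := UniformSpace.secondCountable_of_separable Xb
  exact convergence_in_probability_iff_joint_laws_general fun n ↦ (hX n).aemeasurable
end
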